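/- arXiv:1001.4954 — 8 statements merged into one kernel-verified Lean document; each statement's English description precedes it below -/
import Mathlib

section
/- Let n ≥ 3 be an integer and let a, b be integers with 1 ≤ a ≤ b. Define the sequence of integer pairs (a_0, b_0) = (a, b) and (a_{i+1}, b_{i+1}) = (n·b_i − a_i, (n²−1)·b_i − n·a_i) for i ≥ 0 (i.e., (a_i, b_i) = (a,b)·(Φ⁻¹)^i). Then for every i ≥ 1: (1) a < a_i and b < b_i; (2) a_i < b_i; and (3) for every r ≥ 0, the componentwise sum satisfies Σ_{i=0}^{r} a_i < a_{r+1} and Σ_{i=0}^{r} b_i < b_{r+1}. -/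
/-- One step of the inverse Coxeter transformation at least doubles both coordinates of a vector
`(x, y)` with `1 ≤ x ≤ y`, and makes the second coordinate strictly larger than the first. -/
theorem two_mul_le_inverse_coxeter_step {n x y : ℤ} (hn : 3 ≤ n) (hx : 1 ≤ x) (hxy : x ≤ y) :
    2 * x ≤ n * y - x ∧ 2 * y ≤ (n ^ 2 - 1) * y - n * x ∧
      n * y - x < (n ^ 2 - 1) * y - n * x := by
  have hfst : 2 * y ≤ n * y - x := by nlinarith
  have hsnd : 3 * (n * y - x) ≤ n * (n * y - x) :=
    mul_le_mul_of_nonneg_right hn (by linarith)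
  have heq : (n ^ 2 - 1) * y - n * x = n * (n * y - x) - y := by ring
  rw [heq]
  refine ⟨?_, ?_, ?_⟩ <;> linarith

/-- A sequence of integers with positive initial term that at least doubles at each step exceeds
the sum of all its previous terms. -/
theorem sum_range_lt_of_two_mul_le_succ {f : ℕ → ℤ} (h0 : 0 < f 0)
    (h : ∀ i, 2 * f i ≤ f (i + 1)) (r : ℕ) : ∑ i ∈ Finset.range r, f i < f r := by
  induction r with
  | zero => simpa using h0
  | succ r ih =>
    rw [Finset.sum_range_succ]
    linarith [h r]

/-- For `n ≥ 3` and `1 ≤ a ≤ b`, the sequence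
`(a₀,b₀) = (a,b)`, `(a_{i+1},b_{i+1}) = (n·b_i − a_i, (n²−1)·b_i − n·a_i)`
(i.e. `(a_i,b_i) = (a,b)·(Φ⁻¹)^i`) satisfies:
(1) `a < a_i` and `b < b_i` for all `i ≥ 1`;
(2) `a_i < b_i` for all `i ≥ 1`;
(3) `Σ_{i=0}^{r} a_i < a_{r+1}` and `Σ_{i=0}^{r} b_i < b_{r+1}` for all `r ≥ 0`. -/
theorem stmt0 (n : ℤ) (hn : 3 ≤ n) (a b : ℤ) (ha : 1 ≤ a) (hab : a ≤ b)
    (A B : ℕ → ℤ) (hA0 : A 0 = a) (hB0 : B 0 = b)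
    (hrec : ∀ i : ℕ, A (i + 1) = n * B i - A i ∧
      B (i + 1) = (n ^ 2 - 1) * B i - n * A i) :
    (∀ i : ℕ, 1 ≤ i → a < A i ∧ b < B i) ∧
    (∀ i : ℕ, 1 ≤ i → A i < B i) ∧
    (∀ r : ℕ, (∑ i ∈ Finset.range (r + 1), A i) < A (r + 1) ∧
      (∑ i ∈ Finset.range (r + 1), B i) < B (r + 1)) := by
  have hpos : ∀ i, 1 ≤ A i ∧ A i ≤ B i := by
    intro i
    induction i with
    | zero => exact ⟨hA0 ▸ ha, hA0 ▸ hB0 ▸ hab⟩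
    | succ i ih =>
      obtain ⟨hfst, -, hlt⟩ := two_mul_le_inverse_coxeter_step hn ih.1 ih.2
      rw [(hrec i).1, (hrec i).2]
      exact ⟨by linarith [ih.1], hlt.le⟩
  have hstep : ∀ i, 2 * A i ≤ A (i + 1) ∧ 2 * B i ≤ B (i + 1) ∧ A (i + 1) < B (i + 1) := by
    intro i
    rw [(hrec i).1, (hrec i).2]
    exact two_mul_le_inverse_coxeter_step hn (hpos i).1 (hpos i).2
  have hAmono : StrictMono A :=
    strictMono_nat_of_lt_succ fun i => by linarith [(hstep i).1, (hpos i).1]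
  have hBmono : StrictMono B :=
    strictMono_nat_of_lt_succ fun i => by linarith [(hstep i).2.1, (hpos i).1, (hpos i).2]
  refine ⟨fun i hi => ⟨hA0 ▸ hAmono hi, hB0 ▸ hBmono hi⟩, fun i hi => ?_, fun r => ⟨?_, ?_⟩⟩
  · obtain ⟨j, rfl⟩ := Nat.exists_eq_add_of_le' hi
    exact (hstep j).2.2
  · exact sum_range_lt_of_two_mul_le_succ (by linarith) (fun i => (hstep i).1) (r + 1)
  · exact sum_range_lt_of_two_mul_le_succ (by linarith) (fun i => (hstep i).2.1) (r + 1)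
end

section
/- Let n ≥ 3 be an integer, let c be an integer with 1 ≤ c ≤ n − 1, let i ≥ 1, and let (a,b) = (1,c)·(Φ⁻¹)^i, where Φ⁻¹ = [[−1, −n], [n, n²−1]] acts on row vectors on the right. Then 0 < −q(a,b) < (n+1)·a − b, where q(a,b) = a² + b² − n·a·b. -/
/-- Right action of the inverse Coxeter matrix `Φ⁻¹ = [[−1, −n], [n, n²−1]]`
of the `n`-Kronecker quiver on an integer row vector:
`(x,y)·Φ⁻¹ = (n·y − x, (n²−1)·y − n·x)`. -/
def phiInv (n : ℤ) (p : ℤ × ℤ) : ℤ × ℤ :=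
  (n * p.2 - p.1, (n ^ 2 - 1) * p.2 - n * p.1)

/-- The Tits form is invariant under the inverse Coxeter transformation. -/
theorem tits_phiInv (n : ℤ) (p : ℤ × ℤ) :
    (phiInv n p).1 ^ 2 + (phiInv n p).2 ^ 2 - n * (phiInv n p).1 * (phiInv n p).2 =
      p.1 ^ 2 + p.2 ^ 2 - n * p.1 * p.2 := by
  simp only [phiInv]
  ring

theorem tits_phiInv_iterate (n : ℤ) (p : ℤ × ℤ) (i : ℕ) :
    ((phiInv n)^[i] p).1 ^ 2 + ((phiInv n)^[i] p).2 ^ 2 -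
        n * ((phiInv n)^[i] p).1 * ((phiInv n)^[i] p).2 =
      p.1 ^ 2 + p.2 ^ 2 - n * p.1 * p.2 := by
  induction i with
  | zero => rfl
  | succ k ih => rw [Function.iterate_succ_apply', tits_phiInv, ih]

/-- The cone `0 ≤ x ≤ y` is stable under the inverse Coxeter transformation. -/
theorem phiInv_mem_cone {n : ℤ} (hn : 3 ≤ n) {p : ℤ × ℤ} (h0 : 0 ≤ p.1) (h : p.1 ≤ p.2) :
    0 ≤ (phiInv n p).1 ∧ (phiInv n p).1 ≤ (phiInv n p).2 := by
  have hy : 0 ≤ p.2 := h0.trans h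
  simp only [phiInv]
  constructor
  · nlinarith
  · nlinarith [mul_nonneg (sub_nonneg.2 hn) (sub_nonneg.2 h),
      mul_nonneg (mul_nonneg (sub_nonneg.2 hn) (sub_nonneg.2 hn)) hy,
      mul_nonneg (sub_nonneg.2 hn) hy]

/-- Where `x ≤ y`, the functional `(n + 1) x - y` does not decrease under the inverse
Coxeter transformation. -/
theorem functional_le_phiInv {n : ℤ} (hn : 3 ≤ n) {p : ℤ × ℤ} (h : p.1 ≤ p.2) :
    (n + 1) * p.1 - p.2 ≤ (n + 1) * (phiInv n p).1 - (phiInv n p).2 := by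
  simp only [phiInv]
  nlinarith [mul_nonneg (by linarith : 0 ≤ n + 2) (sub_nonneg.2 h)]

theorem functional_phiInv_iterate {n c : ℤ} (hn : 3 ≤ n) (hc : 1 ≤ c) {i : ℕ} (hi : 1 ≤ i) :
    0 ≤ ((phiInv n)^[i] (1, c)).1 ∧
      ((phiInv n)^[i] (1, c)).1 ≤ ((phiInv n)^[i] (1, c)).2 ∧
      n * c + c - 1 ≤ (n + 1) * ((phiInv n)^[i] (1, c)).1 - ((phiInv n)^[i] (1, c)).2 := by
  induction i, hi using Nat.le_induction with
  | base =>
    obtain ⟨h0, h⟩ := phiInv_mem_cone hn (p := (1, c)) zero_le_one hc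
    refine ⟨h0, h, le_of_eq ?_⟩
    simp only [Function.iterate_one, phiInv]
    ring
  | succ k _ ih =>
    obtain ⟨h0, h, hL⟩ := ih
    rw [Function.iterate_succ_apply']
    obtain ⟨h0', h'⟩ := phiInv_mem_cone hn h0 h
    exact ⟨h0', h', hL.trans (functional_le_phiInv hn h)⟩

/-- For `n ≥ 3`, `1 ≤ c ≤ n−1`, `i ≥ 1` and
`(a,b) = (1,c)·(Φ⁻¹)^i`, one has `0 < −q(a,b) < (n+1)·a − b`, where
`q(a,b) = a² + b² − n·a·b`. -/
theorem stmt3 (n c : ℤ) (hn : 3 ≤ n) (hc1 : 1 ≤ c) (hc2 : c ≤ n - 1)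
    (i : ℕ) (hi : 1 ≤ i) (a b : ℤ) (hab : (a, b) = (phiInv n)^[i] (1, c)) :
    0 < -(a ^ 2 + b ^ 2 - n * a * b) ∧
    -(a ^ 2 + b ^ 2 - n * a * b) < (n + 1) * a - b := by
  have hq := tits_phiInv_iterate n (1, c) i
  obtain ⟨-, -, hL⟩ := functional_phiInv_iterate hn hc1 hi
  rw [← hab] at hq hL
  simp only at hq hL
  constructor <;> nlinarith [mul_nonneg (sub_nonneg.2 hc1) (sub_nonneg.2 hc2)]
end

section
/- Let n ≥ 3 be an integer and let a, b be integers with 1 < a ≤ b and q(a,b) ≤ 1 (the latter holds for the dimension vector of any indecomposable representation). If the pair (a−1, b+1) is not an imaginary root, i.e., q(a−1, b+1) ≥ 0, then for every integer t with 1 ≤ t ≤ n·b − a − 1, the pair (n·b − a − t, (n²−1)·b − n·a + t) is not an imaginary root either, i.e., q(n·b − a − t, (n²−1)·b − n·a + t) ≥ 0. -/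
/-- Let `n ≥ 3` and `1 < a ≤ b` with `q(a,b) ≤ 1` where
`q(x,y) = x² + y² − n·x·y`. If `(a−1, b+1)` is not an imaginary root,
i.e. `q(a−1, b+1) ≥ 0`, then for every `1 ≤ t ≤ n·b − a − 1` the pair
`(n·b − a − t, (n²−1)·b − n·a + t)` is not an imaginary root either. -/
theorem stmt5 (n a b : ℤ) (hn : 3 ≤ n) (ha : 1 < a) (hab : a ≤ b)
    (hq : a ^ 2 + b ^ 2 - n * a * b ≤ 1)
    (hroot : 0 ≤ (a - 1) ^ 2 + (b + 1) ^ 2 - n * (a - 1) * (b + 1))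
    (t : ℤ) (ht1 : 1 ≤ t) (ht2 : t ≤ n * b - a - 1) :
    0 ≤ (n * b - a - t) ^ 2 + ((n ^ 2 - 1) * b - n * a + t) ^ 2 -
      n * (n * b - a - t) * ((n ^ 2 - 1) * b - n * a + t) := by
  have hgap : b - a ≤ ((n ^ 2 - 1) * b - n * a) - (n * b - a) := by
    have : 0 ≤ (n - 2) * ((n + 1) * b - a) := mul_nonneg (by linarith) (by nlinarith)
    linarith
  have hstep : b - a + 1 ≤ t * (((n ^ 2 - 1) * b - n * a) - (n * b - a) + t) := by
    nlinarith
  have hmul := mul_le_mul_of_nonneg_left hstep (show 0 ≤ n + 2 by linarith)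
  linarith
end

section
/- Let Φ⁻¹ = [[−1, −3], [3, 8]] (the inverse Coxeter matrix of the 3-Kronecker quiver), acting on integer row vectors on the right. Then for all integers a, b and every integer i ≥ 1, (a, b)·(Φ⁻¹)^i = (F_{4i}·b − F_{4i−2}·a, F_{4i+2}·b − F_{4i}·a), where F_k denotes the k-th Fibonacci number. -/
/-- Right action of the inverse Coxeter matrix `Φ⁻¹ = [[−1, −3], [3, 8]]` of
the `3`-Kronecker quiver on an integer row vector:
`(x,y)·Φ⁻¹ = (3y − x, 8y − 3x)`. -/
def phiInv3 (p : ℤ × ℤ) : ℤ × ℤ :=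
  (3 * p.2 - p.1, 8 * p.2 - 3 * p.1)

/-- The identity `F_{n+4} = 3 F_{n+2} - F_n`, over the integers. -/
theorem fib_add_four_cast (n : ℕ) :
    (Nat.fib (n + 4) : ℤ) = 3 * Nat.fib (n + 2) - Nat.fib n := by
  have h₂ := Nat.fib_add_two (n := n)
  have h₃ := Nat.fib_add_two (n := n + 1)
  have h₄ := Nat.fib_add_two (n := n + 2)
  simp only [add_assoc, Nat.reduceAdd] at h₂ h₃ h₄
  omega

/-- For all integers `a, b` and every `i ≥ 1`,
`(a,b)·(Φ⁻¹)^i = (F_{4i}·b − F_{4i−2}·a, F_{4i+2}·b − F_{4i}·a)`. -/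
theorem stmt8 (a b : ℤ) (i : ℕ) (hi : 1 ≤ i) :
    phiInv3^[i] (a, b) =
      ((Nat.fib (4 * i) : ℤ) * b - (Nat.fib (4 * i - 2) : ℤ) * a,
       (Nat.fib (4 * i + 2) : ℤ) * b - (Nat.fib (4 * i) : ℤ) * a) := by
  induction i, hi using Nat.le_induction with
  | base => simp [phiInv3, Nat.fib_add_two]
  | succ n hn ih =>
    obtain ⟨m, hm⟩ : ∃ m, 4 * n = m + 2 := ⟨4 * n - 2, by omega⟩
    rw [Function.iterate_succ_apply', ih, show 4 * (n + 1) = m + 6 by omega, hm]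
    have h₄ := fib_add_four_cast m
    have h₆ := fib_add_four_cast (m + 2)
    have h₈ := fib_add_four_cast (m + 4)
    simp only [add_assoc, Nat.reduceAdd, Nat.add_sub_cancel] at h₄ h₆ h₈ ⊢
    simp only [phiInv3, show m + 6 - 2 = m + 4 by omega, h₈, h₆, h₄, Prod.mk.injEq]
    constructor <;> ring
end

section
/- Let Φ = [[8, 3], [−3, −1]] and Φ⁻¹ = [[−1, −3], [3, 8]], acting on integer row vectors on the right. Then for every positive integer m and every integer i ≥ 1: (m, m)·Φ^i = (m·F_{4i+1}, m·F_{4i−1}) and (m, m)·(Φ⁻¹)^i = (m·F_{4i−1}, m·F_{4i+1}), where F_k denotes the k-th Fibonacci number. -/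
/-- Right action of the Coxeter matrix `Φ = [[8, 3], [−3, −1]]` of the
`3`-Kronecker quiver on an integer row vector: `(x,y)·Φ = (8x − 3y, 3x − y)`. -/
def phi3 (p : ℤ × ℤ) : ℤ × ℤ :=
  (8 * p.1 - 3 * p.2, 3 * p.1 - p.2)

/-- The Fibonacci recurrences by which the Coxeter matrix shifts `(F_{n+2}, F_n)` to
`(F_{n+6}, F_{n+4})`. -/
theorem fib_coxeter_shift (n : ℕ) :
    (Nat.fib (n + 6) : ℤ) = 8 * Nat.fib (n + 2) - 3 * Nat.fib n ∧
    (Nat.fib (n + 4) : ℤ) = 3 * Nat.fib (n + 2) - Nat.fib n := by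
  have h (k : ℕ) : (Nat.fib (k + 2) : ℤ) = Nat.fib k + Nat.fib (k + 1) := by
    exact_mod_cast Nat.fib_add_two
  have h0 := h n
  have h1 := h (n + 1)
  have h2 := h (n + 2)
  have h3 := h (n + 3)
  have h4 := h (n + 4)
  constructor <;> linarith

/-- For every positive integer `m` and every `i ≥ 1`,
`(m,m)·Φ^i = (m·F_{4i+1}, m·F_{4i−1})` and
`(m,m)·(Φ⁻¹)^i = (m·F_{4i−1}, m·F_{4i+1})`. -/
theorem stmt9 (m : ℤ) (hm : 0 < m) (i : ℕ) (hi : 1 ≤ i) :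
    phi3^[i] (m, m) =
      (m * (Nat.fib (4 * i + 1) : ℤ), m * (Nat.fib (4 * i - 1) : ℤ)) ∧
    phiInv3^[i] (m, m) =
      (m * (Nat.fib (4 * i - 1) : ℤ), m * (Nat.fib (4 * i + 1) : ℤ)) := by
  induction i, hi using Nat.le_induction with
  | base =>
    constructor <;> ext <;> simp [phi3, phiInv3, Nat.fib_add_two] <;> ring
  | succ i hi ih =>
    obtain ⟨n, hn⟩ : ∃ n, 4 * i = n + 1 := ⟨4 * i - 1, by omega⟩
    obtain ⟨h6, h4⟩ := fib_coxeter_shift n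
    have e1 : 4 * (i + 1) + 1 = n + 6 := by omega
    have e2 : 4 * (i + 1) - 1 = n + 4 := by omega
    rw [Function.iterate_succ_apply', Function.iterate_succ_apply', ih.1, ih.2, e1, e2, hn,
      Nat.add_sub_cancel, h6, h4]
    constructor <;> ext <;> simp only [phi3, phiInv3] <;> ring
end

section
/- Let n ≥ 1 be an odd integer. Then F_{2n} < F_{2n+1}, and for every integer i ≥ 1 the componentwise inequalities F_{2n}·F_{4i−1} < F_{2n+4i+1} and F_{2n}·F_{4i+1} < F_{2n+4i+3} hold, where F_k denotes the k-th Fibonacci number. -/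
theorem fib_mul_fib_lt_fib_add_succ (m k : ℕ) :
    Nat.fib m * Nat.fib k < Nat.fib (m + k + 1) := by
  rw [Nat.fib_add]
  exact Nat.lt_add_of_pos_right
    (Nat.mul_pos (Nat.fib_pos.2 m.succ_pos) (Nat.fib_pos.2 k.succ_pos))

/-- For odd `n ≥ 1`, one has `F_{2n} < F_{2n+1}`, and for all
`i ≥ 1`, `F_{2n}·F_{4i−1} < F_{2n+4i+1}` and `F_{2n}·F_{4i+1} < F_{2n+4i+3}`. -/
theorem stmt12 (n : ℕ) (hn : 1 ≤ n) (hodd : Odd n) :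
    Nat.fib (2 * n) < Nat.fib (2 * n + 1) ∧
    ∀ i : ℕ, 1 ≤ i →
      Nat.fib (2 * n) * Nat.fib (4 * i - 1) < Nat.fib (2 * n + 4 * i + 1) ∧
      Nat.fib (2 * n) * Nat.fib (4 * i + 1) < Nat.fib (2 * n + 4 * i + 3) := by
  refine ⟨Nat.fib_lt_fib_succ (by omega), fun i hi => ⟨?_, ?_⟩⟩
  · exact (fib_mul_fib_lt_fib_add_succ _ _).trans_le (Nat.fib_mono (by omega))
  · exact (fib_mul_fib_lt_fib_add_succ _ _).trans_le (Nat.fib_mono (by omega))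
end

section
/- Let n ≥ 2 be an even integer. Then for every integer i ≥ 0 the inequalities F_{2n}·F_{4i+1} < F_{2n+4i+3} and F_{2n}·F_{4i+3} < F_{2n+4i+5} hold, where F_k denotes the k-th Fibonacci number. -/
theorem Nat.fib_mul_fib_lt_fib_add_add_two (m k : ℕ) :
    Nat.fib m * Nat.fib k < Nat.fib (m + k + 2) := by
  have hpos : 0 < Nat.fib (m + 1) * Nat.fib (k + 2) :=
    Nat.mul_pos (Nat.fib_pos.2 (by omega)) (Nat.fib_pos.2 (by omega))
  calc Nat.fib m * Nat.fib k ≤ Nat.fib m * Nat.fib (k + 1) :=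
        Nat.mul_le_mul_left _ Nat.fib_le_fib_succ
    _ < Nat.fib m * Nat.fib (k + 1) + Nat.fib (m + 1) * Nat.fib (k + 2) :=
        Nat.lt_add_of_pos_right hpos
    _ = Nat.fib (m + k + 2) := (Nat.fib_add m (k + 1)).symm

/-- For even `n ≥ 2` and every `i ≥ 0`,
`F_{2n}·F_{4i+1} < F_{2n+4i+3}` and `F_{2n}·F_{4i+3} < F_{2n+4i+5}`. -/
theorem stmt13 (n : ℕ) (hn : 2 ≤ n) (heven : Even n) (i : ℕ) :
    Nat.fib (2 * n) * Nat.fib (4 * i + 1) < Nat.fib (2 * n + 4 * i + 3) ∧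
    Nat.fib (2 * n) * Nat.fib (4 * i + 3) < Nat.fib (2 * n + 4 * i + 5) :=
  ⟨Nat.fib_mul_fib_lt_fib_add_add_two (2 * n) (4 * i + 1),
    Nat.fib_mul_fib_lt_fib_add_add_two (2 * n) (4 * i + 3)⟩
end

section
/- Let φ = (1+√5)/2 be the golden ratio. Then for all integers n ≥ 1 and i ≥ 1, the inequality 3·F_{2n}·(F_{4i−1} + F_{4i+1}) < (3 − φ)·F_{2n+2}·F_{4i+3} holds as real numbers, where F_k denotes the k-th Fibonacci number. -/
theorem two_mul_fib_le_fib_add_two (k : ℕ) : 2 * Nat.fib k ≤ Nat.fib (k + 2) := by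
  have h : Nat.fib k ≤ Nat.fib (k + 1) := Nat.fib_le_fib_succ
  rw [Nat.fib_add_two]
  omega

theorem five_mul_fib_add_fib_le (k : ℕ) :
    5 * (Nat.fib k + Nat.fib (k + 2)) ≤ 3 * Nat.fib (k + 4) := by
  have h : Nat.fib k ≤ Nat.fib (k + 1) := Nat.fib_le_fib_succ
  have h₂ : Nat.fib (k + 2) = Nat.fib k + Nat.fib (k + 1) := Nat.fib_add_two
  have h₃ : Nat.fib (k + 3) = Nat.fib (k + 1) + Nat.fib (k + 2) := Nat.fib_add_two
  have h₄ : Nat.fib (k + 4) = Nat.fib (k + 2) + Nat.fib (k + 3) := Nat.fib_add_two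
  omega

/-- With `φ = (1+√5)/2` the golden ratio, for all `n ≥ 1` and
`i ≥ 1`, `3·F_{2n}·(F_{4i−1} + F_{4i+1}) < (3 − φ)·F_{2n+2}·F_{4i+3}`
as real numbers. -/
theorem stmt17 (φ : ℝ) (hφ : φ = (1 + Real.sqrt 5) / 2)
    (n i : ℕ) (hn : 1 ≤ n) (hi : 1 ≤ i) :
    3 * (Nat.fib (2 * n) : ℝ) *
        ((Nat.fib (4 * i - 1) : ℝ) + (Nat.fib (4 * i + 1) : ℝ)) <
      (3 - φ) * (Nat.fib (2 * n + 2) : ℝ) * (Nat.fib (4 * i + 3) : ℝ) := by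
  have hφ₂ : φ < 2 := hφ ▸ Real.goldenRatio_lt_two
  have hx : 2 * (Nat.fib (2 * n) : ℝ) ≤ Nat.fib (2 * n + 2) := by
    exact_mod_cast two_mul_fib_le_fib_add_two (2 * n)
  have hy : 5 * ((Nat.fib (4 * i - 1) : ℝ) + Nat.fib (4 * i + 1)) ≤
      3 * Nat.fib (4 * i + 3) := by
    have h := five_mul_fib_add_fib_le (4 * i - 1)
    rw [show 4 * i - 1 + 2 = 4 * i + 1 by omega,
      show 4 * i - 1 + 4 = 4 * i + 3 by omega] at h
    exact_mod_cast h
  have hX : (0 : ℝ) < Nat.fib (2 * n + 2) := by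
    exact_mod_cast Nat.fib_pos.2 (by omega)
  have hY : (0 : ℝ) < Nat.fib (4 * i + 3) := by
    exact_mod_cast Nat.fib_pos.2 (by omega)
  have hmul := mul_le_mul hx hy (by positivity) hX.le
  have hXY := mul_pos hX hY
  have hlt := mul_lt_mul_of_pos_right (show 1 < 3 - φ by linarith) hXY
  linarith
end
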